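/- Let A and C be unital C*-algebras, let G be a normal subgroup of the unitary group U(C) containing the identity component U₀(C), let h₁ : A → C be a unital *-homomorphism, let u ∈ U(C), and define h₂(a) = u* h₁(a) u for a ∈ A. If h₁ and h₂ are G-strongly unitarily equivalent, then there exist a unitary v ∈ U(C) with u⁻¹v ∈ G and a unital *-homomorphism Φ : C(𝕋, A) → C such that Φ(const a) = h₁(a) for all a ∈ A and Φ(ζ) = v. -/

import Mathlib

/-- The canonical unitary `ζ ∈ C(𝕋, A)`, `ζ(z) = z • 1`. -/
noncomputable def circleUnitary (A : Type*) [NormedRing A] [NormedAlgebra ℂ A] :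
    C(Circle, A) :=
  ⟨fun z => (z : ℂ) • (1 : A), (continuous_subtype_val.smul continuous_const)⟩

open Topology in
/-- Finite partitions of unity subordinate to a neighbourhood assignment. -/
theorem exists_finite_partition {X : Type*} [TopologicalSpace X] [CompactSpace X] [T2Space X]
    (U : X → Set X) (hU : ∀ x, U x ∈ 𝓝 x) :
    ∃ (s : Finset X) (ρ : s → C(X, ℝ)), (∀ i y, 0 ≤ ρ i y) ∧ (∀ y, ∑ i, ρ i y = 1) ∧
      ∀ i y, ρ i y ≠ 0 → y ∈ U i := by
  obtain ⟨s, hs⟩ := CompactSpace.elim_nhds_subcover (fun x => interior (U x))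
    (fun x => interior_mem_nhds.2 (hU x))
  have hcov : (Set.univ : Set X) ⊆ ⋃ i : s, interior (U i) := by
    intro y _
    have : y ∈ ⋃ x ∈ s, interior (U x) := by rw [hs]; trivial
    simpa using this
  obtain ⟨f, hf⟩ := PartitionOfUnity.exists_isSubordinate isClosed_univ
    (fun i : s => interior (U i)) (fun i => isOpen_interior) hcov
  refine ⟨s, fun i => f i, fun i y => f.nonneg i y, fun y => ?_, fun i y hy => ?_⟩
  · rw [← finsum_eq_sum_of_fintype]
    exact f.sum_eq_one (Set.mem_univ y)
  · exact interior_subset (hf i (subset_tsupport _ hy))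

section Circ

variable {X : Type*} [TopologicalSpace X] [CompactSpace X] [T2Space X]
  {A C : Type*} [CStarAlgebra A] [CStarAlgebra C]

open Topology

/-- If `c` commutes with the image of `ψ` and is locally bounded by `r`, it is bounded by `r`. -/
theorem norm_le_of_local (ψ : C(X, ℂ) →⋆ₐ[ℂ] C) (c : C) (hc : ∀ g, Commute c (ψ g)) (r : ℝ)
    (hr : 0 ≤ r)
    (H : ∀ x, ∃ d : C(X, ℂ), (∀ᶠ y in 𝓝 x, d y = 1) ∧ ‖c * ψ d‖ ≤ r) : ‖c‖ ≤ r := by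
  let _ : PartialOrder C := CStarAlgebra.spectralOrder C
  have _ : StarOrderedRing C := CStarAlgebra.spectralOrderedRing C
  choose d hd hdr using H
  obtain ⟨s, ρ, h0, h1, hs⟩ := exists_finite_partition (fun x => {y | d x y = 1}) hd
  let q : s → C(X, ℂ) := fun i => ⟨fun y => ((Real.sqrt (ρ i y) : ℝ) : ℂ), by fun_prop⟩
  have hqs : ∀ i, star (q i) = q i := by
    intro i; ext y; simp [q]
  have hqd : ∀ i : s, d i * q i = q i := by
    intro i; ext y
    by_cases hy : ρ i y = 0
    · simp [q, hy]
    · have : d i y = 1 := hs i y hy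
      simp [this]
  have hq1 : ∑ i, q i * q i = 1 := by
    ext y
    have : ∀ i, (q i * q i) y = ((ρ i y : ℝ) : ℂ) := by
      intro i
      simp only [q, ContinuousMap.mul_apply, ContinuousMap.coe_mk]
      rw [← Complex.ofReal_mul, Real.mul_self_sqrt (h0 i y)]
    rw [ContinuousMap.sum_apply]
    simp only [this]
    rw [← Complex.ofReal_sum, h1]; simp
  have hψ1 : ∑ i, ψ (q i) * ψ (q i) = 1 := by
    rw [← map_one ψ, ← hq1, map_sum]; simp
  have key : star c * c = ∑ i, star (ψ (q i)) * (star (c * ψ (d i)) * (c * ψ (d i))) * ψ (q i) := by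
    have : ∀ i, star (ψ (q i)) * (star (c * ψ (d i)) * (c * ψ (d i))) * ψ (q i)
        = star c * c * (ψ (q i) * ψ (q i)) := by
      intro i
      have e : c * ψ (d i) * ψ (q i) = c * ψ (q i) := by
        rw [mul_assoc, ← map_mul, hqd]
      calc _ = star (c * ψ (d i) * ψ (q i)) * (c * ψ (d i) * ψ (q i)) := by
            simp only [star_mul, mul_assoc]
        _ = star (ψ (q i) * c) * (c * ψ (q i)) := by rw [e, (hc (q i)).eq]
        _ = star c * (ψ (q i) * c) * ψ (q i) := by
            rw [star_mul, ← map_star, hqs]; simp only [mul_assoc]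
        _ = _ := by rw [← (hc (q i)).eq]; simp only [mul_assoc]
    simp only [this]
    rw [← Finset.mul_sum, hψ1, mul_one]
  have hle : star c * c ≤ algebraMap ℝ C (r ^ 2) := by
    have e2 : algebraMap ℝ C (r ^ 2)
        = ∑ i, star (ψ (q i)) * (algebraMap ℝ C (r ^ 2)) * ψ (q i) := by
      have : ∀ i, star (ψ (q i)) * (algebraMap ℝ C (r ^ 2)) * ψ (q i)
          = algebraMap ℝ C (r ^ 2) * (ψ (q i) * ψ (q i)) := by
        intro i
        rw [← map_star, hqs, ← Algebra.commutes, mul_assoc]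
      simp only [this]
      rw [← Finset.mul_sum, hψ1, mul_one]
    rw [key, e2]
    refine Finset.sum_le_sum fun i _ => star_left_conjugate_le_conjugate ?_ _
    refine (CStarAlgebra.norm_le_iff_le_algebraMap _ (by positivity)
      (star_mul_self_nonneg _)).1 ?_
    rw [CStarRing.norm_star_mul_self, ← sq]
    have := hdr i
    gcongr
  have := (CStarAlgebra.norm_le_iff_le_algebraMap _ (by positivity)
      (star_mul_self_nonneg c)).2 hle
  rw [CStarRing.norm_star_mul_self, ← sq] at this
  exact le_of_sq_le_sq this hr

/-- `c` is the value at `f` of the homomorphism built from `h` and `ψ`. -/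
structure CircRel (h : A →⋆ₐ[ℂ] C) (ψ : C(X, ℂ) →⋆ₐ[ℂ] C) (f : C(X, A)) (c : C) : Prop where
  comm : ∀ g, Commute c (ψ g)
  loc : ∀ x, ∀ ε > 0, ∃ d : C(X, ℂ), ‖d‖ ≤ 1 ∧ (∀ᶠ y in 𝓝 x, d y = 1) ∧
    ‖(c - h (f x)) * ψ d‖ ≤ ε

namespace CircRel

variable {h : A →⋆ₐ[ℂ] C} {ψ : C(X, ℂ) →⋆ₐ[ℂ] C}

theorem norm_psi_le (d : C(X, ℂ)) (hd : ‖d‖ ≤ 1) : ‖ψ d‖ ≤ 1 :=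
  (NonUnitalStarAlgHom.norm_apply_le ψ d).trans hd

theorem mul_bound {b : C} {d : C(X, ℂ)} {ε : ℝ} (hb : ‖b‖ ≤ ε) (hd : ‖d‖ ≤ 1) :
    ‖b * ψ d‖ ≤ ε :=
  calc _ ≤ ‖b‖ * ‖ψ d‖ := norm_mul_le _ _
    _ ≤ ‖b‖ * 1 := by gcongr; exact norm_psi_le d hd
    _ ≤ ε := by simpa

theorem const (hcomm : ∀ a g, Commute (h a) (ψ g)) (a : A) :
    CircRel h ψ (ContinuousMap.const X a) (h a) where
  comm := hcomm a
  loc x ε hε := by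
    refine ⟨1, ?_, by simp, by simp [hε.le]⟩
    exact (ContinuousMap.norm_le _ zero_le_one).2 (by simp)

theorem add {f f' : C(X, A)} {c c' : C} (H : CircRel h ψ f c) (H' : CircRel h ψ f' c') :
    CircRel h ψ (f + f') (c + c') where
  comm g := (H.comm g).add_left (H'.comm g)
  loc x ε hε := by
    obtain ⟨d, hd, hd1, hde⟩ := H.loc x (ε / 2) (by positivity)
    obtain ⟨d', hd', hd1', hde'⟩ := H'.loc x (ε / 2) (by positivity)
    refine ⟨d * d', (norm_mul_le _ _).trans (mul_le_one₀ hd (norm_nonneg _) hd'), ?_, ?_⟩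
    · filter_upwards [hd1, hd1'] with y h1 h2
      simp [h1, h2]
    · have e : (c + c' - h ((f + f') x)) * ψ (d * d')
          = (c - h (f x)) * ψ d * ψ d' + (c' - h (f' x)) * ψ d' * ψ d := by
        rw [mul_assoc _ (ψ d) , mul_assoc _ (ψ d'), ← map_mul, ← map_mul, mul_comm d' d,
          ContinuousMap.add_apply, map_add, ← add_mul]
        congr 1; abel
      rw [e]
      have h1 := mul_bound (ψ := ψ) hde hd'
      have h2 := mul_bound (ψ := ψ) hde' hd
      exact (norm_add_le _ _).trans (by linarith)

theorem mul (hcomm : ∀ a g, Commute (h a) (ψ g)) {f f' : C(X, A)} {c c' : C}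
    (H : CircRel h ψ f c) (H' : CircRel h ψ f' c') :
    CircRel h ψ (f * f') (c * c') where
  comm g := (H.comm g).mul_left (H'.comm g)
  loc x ε hε := by
    obtain ⟨d, hd, hd1, hde⟩ := H.loc x (ε / 2 / (‖h (f' x)‖ + 1)) (by positivity)
    obtain ⟨d', hd', hd1', hde'⟩ := H'.loc x (ε / 2 / (‖c‖ + 1)) (by positivity)
    refine ⟨d * d', (norm_mul_le _ _).trans (mul_le_one₀ hd (norm_nonneg _) hd'), ?_, ?_⟩
    · filter_upwards [hd1, hd1'] with y h1 h2
      simp [h1, h2]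
    · have e : (c * c' - h ((f * f') x)) * ψ (d * d')
          = c * ((c' - h (f' x)) * ψ d') * ψ d
            + ((c - h (f x)) * ψ d) * h (f' x) * ψ d' := by
        have e1 : ((c - h (f x)) * ψ d) * h (f' x) * ψ d'
            = (c - h (f x)) * h (f' x) * ψ (d * d') := by
          rw [mul_assoc _ (ψ d), ← (hcomm (f' x) d).eq, map_mul]; simp only [mul_assoc]
        have e2 : c * ((c' - h (f' x)) * ψ d') * ψ d = c * (c' - h (f' x)) * ψ (d * d') := by
          rw [mul_comm d d', map_mul]; simp only [mul_assoc]
        rw [e1, e2, ← add_mul, ContinuousMap.mul_apply, map_mul]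
        congr 1; noncomm_ring
      rw [e]
      have h1 : ‖c * ((c' - h (f' x)) * ψ d')‖ ≤ ε / 2 := by
        calc _ ≤ ‖c‖ * (ε / 2 / (‖c‖ + 1)) := (norm_mul_le _ _).trans (by gcongr)
          _ ≤ (‖c‖ + 1) * (ε / 2 / (‖c‖ + 1)) := by gcongr; linarith
          _ = _ := by field_simp
      have h2 : ‖((c - h (f x)) * ψ d) * h (f' x)‖ ≤ ε / 2 := by
        calc _ ≤ (ε / 2 / (‖h (f' x)‖ + 1)) * ‖h (f' x)‖ := (norm_mul_le _ _).trans (by gcongr)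
          _ ≤ (ε / 2 / (‖h (f' x)‖ + 1)) * (‖h (f' x)‖ + 1) := by gcongr; linarith
          _ = _ := by field_simp
      have h1 := mul_bound (ψ := ψ) h1 hd
      have h2 := mul_bound (ψ := ψ) h2 hd'
      exact (norm_add_le _ _).trans (by linarith)

theorem star' (hcomm : ∀ a g, Commute (h a) (ψ g)) {f : C(X, A)} {c : C}
    (H : CircRel h ψ f c) : CircRel h ψ (star f) (star c) where
  comm g := by
    have := (H.comm (star g)).star_star
    rwa [← map_star, star_star] at this
  loc x ε hε := by
    obtain ⟨d, hd, hd1, hde⟩ := H.loc x ε hε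
    refine ⟨star d, by rwa [norm_star], ?_, ?_⟩
    · filter_upwards [hd1] with y h1
      simp [h1]
    · have hb : Commute (c - h (f x)) (ψ d) := (H.comm d).sub_left (hcomm _ d)
      have e : (star c - h ((star f) x)) * ψ (star d) = star ((c - h (f x)) * ψ d) := by
        rw [hb.eq, star_mul, star_sub, map_star, ← map_star h, ContinuousMap.star_apply]
      rw [e, norm_star]; exact hde

theorem smul_one (g : C(X, ℂ)) (f : C(X, A)) (hf : ∀ y, f y = g y • 1) :
    CircRel h ψ f (ψ g) where
  comm g' := by rw [commute_iff_eq, ← map_mul, ← map_mul, mul_comm]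
  loc x ε hε := by
    have ho : IsOpen {y | ‖g y - g x‖ < ε} :=
      isOpen_lt (by fun_prop) continuous_const
    have hn : {y | ‖g y - g x‖ < ε} ∈ 𝓝 x := ho.mem_nhds (by simpa using hε)
    obtain ⟨K, hK, hKc, hKs⟩ := exists_mem_nhds_isClosed_subset hn
    obtain ⟨φ, hφ0, hφ1, hφ⟩ := exists_continuous_zero_one_of_isClosed
      ho.isClosed_compl hKc (Set.disjoint_left.2 fun y hy hy' => hy (hKs hy'))
    have hnφ : ∀ y, ‖((φ y : ℝ) : ℂ)‖ ≤ 1 := fun y => by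
      rw [Complex.norm_real, Real.norm_of_nonneg (hφ y).1]; exact (hφ y).2
    refine ⟨⟨fun y => ((φ y : ℝ) : ℂ), by fun_prop⟩, ?_, ?_, ?_⟩
    · exact (ContinuousMap.norm_le _ zero_le_one).2 hnφ
    · filter_upwards [hK] with y hy
      have := hφ1 hy
      simp at this
      simp [this]
    · have e : h (f x) = ψ (ContinuousMap.const X (g x)) := by
        have : ContinuousMap.const X (g x) = algebraMap ℂ C(X, ℂ) (g x) := by
          ext; simp
        rw [this, AlgHomClass.commutes, hf, map_smul, map_one, Algebra.algebraMap_eq_smul_one]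
      rw [e, ← map_sub, ← map_mul]
      refine (NonUnitalStarAlgHom.norm_apply_le ψ _).trans ?_
      refine (ContinuousMap.norm_le _ hε.le).2 fun y => ?_
      simp only [ContinuousMap.mul_apply, ContinuousMap.sub_apply, ContinuousMap.const_apply,
        ContinuousMap.coe_mk, norm_mul]
      by_cases hy : ‖g y - g x‖ < ε
      · calc _ ≤ ε * 1 := by gcongr; exact hnφ y
          _ = ε := mul_one _
      · have := hφ0 (show y ∈ {y | ‖g y - g x‖ < ε}ᶜ from hy)
        simp at this
        simp [this, hε.le]

theorem norm_le {f : C(X, A)} {c : C} (H : CircRel h ψ f c) : ‖c‖ ≤ ‖f‖ := by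
  refine le_of_forall_pos_le_add fun ε hε => ?_
  refine norm_le_of_local ψ c H.comm _ (by positivity) fun x => ?_
  obtain ⟨d, hd, hd1, hde⟩ := H.loc x ε hε
  refine ⟨d, hd1, ?_⟩
  have e : c * ψ d = h (f x) * ψ d + (c - h (f x)) * ψ d := by rw [← add_mul]; congr 1; abel
  rw [e]
  refine (norm_add_le _ _).trans (add_le_add (mul_bound ?_ hd) hde)
  exact (NonUnitalStarAlgHom.norm_apply_le h _).trans (f.norm_coe_le_norm x)

theorem sub (hcomm : ∀ a g, Commute (h a) (ψ g)) {f f' : C(X, A)} {c c' : C}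
    (H : CircRel h ψ f c) (H' : CircRel h ψ f' c') : CircRel h ψ (f - f') (c - c') := by
  have := H.add ((const hcomm (-1)).mul hcomm H')
  convert this using 1
  · ext; simp [sub_eq_add_neg]
  · simp [sub_eq_add_neg]

theorem unique (hcomm : ∀ a g, Commute (h a) (ψ g)) {f : C(X, A)} {c c' : C}
    (H : CircRel h ψ f c) (H' : CircRel h ψ f c') : c = c' := by
  have := (H.sub hcomm H').norm_le
  rw [sub_self, norm_zero] at this
  exact sub_eq_zero.1 (norm_le_zero_iff.1 this)

theorem sum (hcomm : ∀ a g, Commute (h a) (ψ g)) {ι : Type*} (s : Finset ι)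
    (f : ι → C(X, A)) (c : ι → C) (H : ∀ i, CircRel h ψ (f i) (c i)) :
    CircRel h ψ (∑ i ∈ s, f i) (∑ i ∈ s, c i) := by
  classical
  induction s using Finset.induction_on with
  | empty =>
    have := const (X := X) hcomm 0
    rw [map_zero] at this
    simpa using this
  | insert i s hi ih =>
    rw [Finset.sum_insert hi, Finset.sum_insert hi]
    exact (H i).add ih

theorem approx (hcomm : ∀ a g, Commute (h a) (ψ g)) (f : C(X, A)) (ε : ℝ) (hε : 0 < ε) :
    ∃ f' c, CircRel h ψ f' c ∧ ‖f' - f‖ ≤ ε := by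
  obtain ⟨s, ρ, h0, h1, hs⟩ := exists_finite_partition (fun x => {y | ‖f x - f y‖ < ε})
    (fun x => (isOpen_lt (by fun_prop) continuous_const).mem_nhds (by simpa using hε))
  let g : s → C(X, ℂ) := fun i => ⟨fun y => ((ρ i y : ℝ) : ℂ), by fun_prop⟩
  let k : s → C(X, A) := fun i => ⟨fun y => g i y • 1, by fun_prop⟩
  refine ⟨_, _, sum hcomm Finset.univ _ _ fun i : s =>
    (const hcomm (f i)).mul hcomm (smul_one (g i) (k i) fun y => rfl), ?_⟩
  refine (ContinuousMap.norm_le _ hε.le).2 fun y => ?_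
  have hone : ∑ i, g i y = 1 := by
    simp only [g, ContinuousMap.coe_mk]
    rw [← Complex.ofReal_sum, h1]; simp
  have e : ((∑ i : s, ContinuousMap.const X (f i) * k i) - f) y = ∑ i : s, g i y • (f i - f y) := by
    simp only [smul_sub, Finset.sum_sub_distrib, ← Finset.sum_smul, hone, one_smul]
    simp [ContinuousMap.sum_apply, k]
  rw [e]
  calc _ ≤ ∑ i : s, ‖g i y • (f i - f y)‖ := norm_sum_le _ _
    _ ≤ ∑ i, ρ i y * ε := by
      refine Finset.sum_le_sum fun i _ => ?_
      have hg : ‖g i y‖ = ρ i y := by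
        simp only [g, ContinuousMap.coe_mk]
        rw [Complex.norm_real, Real.norm_of_nonneg (h0 i y)]
      rw [norm_smul, hg]
      by_cases hy : ρ i y = 0
      · simp [hy]
      · have : ‖f i - f y‖ < ε := hs i y hy
        have := h0 i y
        gcongr
    _ = ε := by rw [← Finset.sum_mul, h1, one_mul]

theorem exists_rel (hcomm : ∀ a g, Commute (h a) (ψ g)) (f : C(X, A)) :
    ∃ c, CircRel h ψ f c := by
  have hpos : ∀ n : ℕ, (0 : ℝ) < 1 / ((n : ℝ) + 1) := fun n => by positivity
  choose F c hF hFn using fun n : ℕ => approx (ψ := ψ) hcomm f (1 / ((n : ℝ) + 1)) (hpos n)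
  have hlim : Filter.Tendsto (fun n : ℕ => 1 / ((n : ℝ) + 1)) Filter.atTop (𝓝 0) :=
    tendsto_one_div_add_atTop_nhds_zero_nat
  have hFlim : Filter.Tendsto F Filter.atTop (𝓝 f) := by
    rw [tendsto_iff_norm_sub_tendsto_zero]
    exact squeeze_zero (fun _ => norm_nonneg _) hFn hlim
  have hcau : CauchySeq c := by
    have hFc := hFlim.cauchySeq
    rw [Metric.cauchySeq_iff] at hFc ⊢
    intro ε hε
    obtain ⟨N, hN⟩ := hFc ε hε
    refine ⟨N, fun m hm n hn => ?_⟩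
    have := hN m hm n hn
    rw [dist_eq_norm] at this ⊢
    exact ((hF m).sub hcomm (hF n)).norm_le.trans_lt this
  obtain ⟨c0, hc0⟩ := cauchySeq_tendsto_of_complete hcau
  refine ⟨c0, fun g => ?_, fun x ε hε => ?_⟩
  · have h1 : Filter.Tendsto (fun n => c n * ψ g) Filter.atTop (𝓝 (c0 * ψ g)) :=
      hc0.mul_const _
    have h2 : Filter.Tendsto (fun n => c n * ψ g) Filter.atTop (𝓝 (ψ g * c0)) := by
      simp only [fun n => ((hF n).comm g).eq]
      exact hc0.const_mul _
    exact tendsto_nhds_unique h1 h2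
  · have hev1 := (Metric.tendsto_nhds.1 hc0) (ε / 3) (by positivity)
    have hev2 := (Metric.tendsto_nhds.1 hFlim) (ε / 3) (by positivity)
    obtain ⟨n, hn1, hn2⟩ := (hev1.and hev2).exists
    obtain ⟨d, hd, hd1, hde⟩ := (hF n).loc x (ε / 3) (by positivity)
    refine ⟨d, hd, hd1, ?_⟩
    have e : (c0 - h (f x)) * ψ d = (c0 - c n) * ψ d + (c n - h (F n x)) * ψ d
        + h ((F n - f) x) * ψ d := by
      rw [← add_mul, ← add_mul, ContinuousMap.sub_apply, map_sub]; congr 1; abel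
    rw [dist_comm, dist_eq_norm] at hn1
    rw [dist_eq_norm] at hn2
    have b1 := mul_bound (ψ := ψ) hn1.le hd
    have b2 : ‖h ((F n - f) x) * ψ d‖ ≤ ε / 3 := mul_bound
      ((NonUnitalStarAlgHom.norm_apply_le h _).trans
        (((F n - f).norm_coe_le_norm x).trans hn2.le)) hd
    rw [e]
    refine (norm_add₃_le).trans (by linarith)

/-- The homomorphism `C(X, A) → C` attached to commuting homomorphisms. -/
theorem exists_hom (hcomm : ∀ a g, Commute (h a) (ψ g)) :
    ∃ Φ : C(X, A) →⋆ₐ[ℂ] C, ∀ f, CircRel h ψ f (Φ f) := by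
  choose Φ hΦ using exists_rel (ψ := ψ) hcomm
  have hconst : ∀ a, Φ (ContinuousMap.const X a) = h a := fun a =>
    (hΦ _).unique hcomm (const hcomm a)
  refine ⟨{ toFun := Φ
            map_one' := ?_
            map_mul' := fun f g => (hΦ _).unique hcomm ((hΦ f).mul hcomm (hΦ g))
            map_zero' := ?_
            map_add' := fun f g => (hΦ _).unique hcomm ((hΦ f).add (hΦ g))
            commutes' := fun r => ?_
            map_star' := fun f => (hΦ _).unique hcomm ((hΦ f).star' hcomm) }, hΦ⟩
  · exact (hconst 1).trans (map_one h)
  · exact (hconst 0).trans (map_zero h)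
  · exact (hconst (algebraMap ℂ A r)).trans (AlgHomClass.commutes h r)

end CircRel

/-- The universal property of `C(𝕋, A)`. -/
theorem exists_circle_hom (h : A →⋆ₐ[ℂ] C) (v : unitary C) (hv : ∀ a, Commute (v : C) (h a)) :
    ∃ Φ : C(Circle, A) →⋆ₐ[ℂ] C, (∀ a : A, Φ (ContinuousMap.const Circle a) = h a) ∧
      ∀ f : C(Circle, A), (∀ z, f z = (z : ℂ) • 1) → Φ f = (v : C) := by
  have hn : IsStarNormal (v : C) := ⟨by
    rw [commute_iff_eq, Unitary.star_mul_self_of_mem v.2, Unitary.mul_star_self_of_mem v.2]⟩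
  have hsp : ∀ z ∈ spectrum ℂ (v : C), z ∈ Submonoid.unitSphere ℂ := fun z hz =>
    Unitary.spectrum_subset_circle v hz
  let ι : C(spectrum ℂ (v : C), Circle) :=
    ⟨fun z => ⟨z.1, hsp z.1 z.2⟩, Continuous.subtype_mk continuous_subtype_val _⟩
  let ψ : C(Circle, ℂ) →⋆ₐ[ℂ] C :=
    (cfcHom (R := ℂ) hn).comp (ContinuousMap.compStarAlgHom' ℂ ℂ ι)
  have hvs : ∀ a, Commute (star (v : C)) (h a) := fun a => by
    have := (hv (star a)).star_star
    rwa [← map_star, star_star] at this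
  have hcomm : ∀ a g, Commute (h a) (ψ g) := fun a g =>
    ((hv a).cfcHom hn (hvs a) _).symm
  obtain ⟨Φ, hΦ⟩ := CircRel.exists_hom hcomm
  refine ⟨Φ, fun a => (hΦ _).unique hcomm (CircRel.const hcomm a), fun f hf => ?_⟩
  let g : C(Circle, ℂ) := ⟨fun z => (z : ℂ), continuous_subtype_val⟩
  have hg : ψ g = v := by
    conv_rhs => rw [← cfcHom_id (R := ℂ) hn]
    rfl
  rw [← hg]
  exact (hΦ f).unique hcomm (CircRel.smul_one g f hf)

end Circ

/-- Proposition 3.5 (core): if `h₂ = ad u ∘ h₁` is `G`-strongly unitarily equivalent to `h₁`,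
where `G ⊇ U₀(C)` is a normal subgroup of `U(C)`, then there is a unitary `v` with
`u⁻¹ v ∈ G` and a unital `*`-homomorphism `Φ : C(𝕋, A) → C` with `Φ(const a) = h₁(a)`
and `Φ(ζ) = v`. -/
theorem exists_circle_starAlgHom_of_strong_unitary_equiv
    {A C : Type*}
    [NormedRing A] [StarRing A] [CStarRing A] [NormedAlgebra ℂ A]
    [StarModule ℂ A] [CompleteSpace A]
    [NormedRing C] [StarRing C] [CStarRing C] [NormedAlgebra ℂ C]
    [StarModule ℂ C] [CompleteSpace C]
    (G : Subgroup (unitary C)) [G.Normal]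
    (hG : ∀ w : unitary C, w ∈ connectedComponent (1 : unitary C) → w ∈ G)
    (h₁ : A →⋆ₐ[ℂ] C) (u : unitary C)
    (hequiv : ∃ w : unitary C, w ∈ G ∧ ∀ a : A,
      star (w : C) * h₁ a * (w : C) = star (u : C) * h₁ a * (u : C)) :
    ∃ v : unitary C, u⁻¹ * v ∈ G ∧
      ∃ Φ : C(Circle, A) →⋆ₐ[ℂ] C,
        (∀ a : A, Φ (ContinuousMap.const Circle a) = h₁ a) ∧
          Φ (circleUnitary A) = (v : C) := by
  let _ : CStarAlgebra A := {}
  let _ : CStarAlgebra C := {}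
  obtain ⟨w, hw, hwa⟩ := hequiv
  have hv : ∀ a, Commute ((u * w⁻¹ : unitary C) : C) (h₁ a) := by
    intro a
    have hcoe : ((u * w⁻¹ : unitary C) : C) = u * star (w : C) := rfl
    rw [commute_iff_eq, hcoe]
    calc (u : C) * star (w : C) * h₁ a
        = u * (star (w : C) * h₁ a * w) * star (w : C) := by
          simp only [mul_assoc, Unitary.mul_star_self_of_mem w.2, mul_one]
      _ = ((u : C) * star (u : C)) * h₁ a * u * star (w : C) := by
          rw [hwa]; simp only [mul_assoc]
      _ = _ := by rw [Unitary.mul_star_self_of_mem u.2, one_mul, mul_assoc]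
  obtain ⟨Φ, h1, h2⟩ := exists_circle_hom h₁ (u * w⁻¹) hv
  refine ⟨u * w⁻¹, ?_, Φ, h1, h2 _ fun z => rfl⟩
  rw [inv_mul_cancel_left]
  exact G.inv_mem hw
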